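/- arXiv:math/0406504 — 2 statements merged into one kernel-verified Lean document; each statement's English description precedes it below -/
import Mathlib

section
/- For every odd n ≥ 1 and every ε ∈ (0,1/2), there exists K = K(n,ε) such that for all k ≥ K, the unique best protocol up to π_S for maximizing 𝒫(f_1,…,f_k;ε) over protocols of balanced functions is f_1 = ⋯ = f_k = Maj_n. -/
open Finset

/-- Probability weight of receiving `y` when the source string is `x`: each bit of `x`
is flipped independently with probability `ε`. -/
noncomputable def noiseWt (ε : ℝ) {n : ℕ} (x y : Fin n → Bool) : ℝ :=
  ∏ j : Fin n, if y j = x j then 1 - ε else ε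

/-- A function is balanced if it takes the values `false` and `true` equally often. -/
def BalancedFn {n : ℕ} (f : (Fin n → Bool) → Bool) : Prop :=
  (Finset.univ.filter fun x : Fin n → Bool => f x = false).card =
    (Finset.univ.filter fun x : Fin n → Bool => f x = true).card

/-- The transformation `π_S` : permute coordinates by `π` and flip the bits outside `S`. -/
def piS {n : ℕ} (π : Equiv.Perm (Fin n)) (S : Finset (Fin n)) (x : Fin n → Bool) :
    Fin n → Bool :=
  fun i => if i ∈ S then x (π i) else !(x (π i))

/-- `𝒫(f₁,…,f_k; ε)`: the probability that all `k` parties agree, where the source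
`x` is uniform on `{0,1}^n` and party `i` receives an independent `ε`-corruption `yᵢ` of `x`. -/
noncomputable def agreeProb (ε : ℝ) (n k : ℕ) (fs : Fin k → (Fin n → Bool) → Bool) : ℝ :=
  ((2 : ℝ) ^ n)⁻¹ * ∑ x : Fin n → Bool, ∑ ys : Fin k → Fin n → Bool,
    (∏ i : Fin k, noiseWt ε x (ys i)) *
      (if ∀ i j : Fin k, fs i (ys i) = fs j (ys j) then 1 else 0)

/-- The number of ones (`true` coordinates) in a string. -/
def countOnes {n : ℕ} (x : Fin n → Bool) : ℕ := ∑ i : Fin n, cond (x i) 1 0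

/-- The majority function on `n` bits: `1` iff more than `n/2` of the bits are `1`. -/
def majn (n : ℕ) : (Fin n → Bool) → Bool := fun x => decide (n < 2 * countOnes x)

/-!
Given the source `x`, a received word is the likelier the closer it is to `x`, so among the balanced
functions the indicator of the Hamming ball of radius `n / 2` around `x` has the strictly largest
probability `p` of outputting `1`; every other balanced function has probability at most `r * p` for
some `r < 1`. These indicators are the functions `Maj_n ∘ π_S`, and different centres give different
balls. If all parties use one ball, its centre alone contributes `p ^ k` to the sum over `x` of the
probabilities that everybody outputs `1`, and the antipode of the centre does the same for the
output `0`. For any other protocol, some centre `a` fits the most parties, and misses at least one;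
all other centres miss at least half of the parties. Hence its sum is at most
`p ^ k * (r + 2 ^ n * r ^ (k / 2))`, which is below `p ^ k` for large `k`.
-/

open Filter Topology

section PairwiseLargest

variable {α M : Type*} [AddCommMonoid M] [LinearOrder M] [IsOrderedCancelAddMonoid M]

theorem sum_lt_sum_of_card_eq_of_forall_lt {w : α → M} {s t : Finset α} (hcard : #s = #t)
    (hne : s ≠ t) (hw : ∀ y ∈ t, ∀ z ∉ t, w z < w y) : ∑ y ∈ s, w y < ∑ y ∈ t, w y := by
  classical
  have hst : (s \ t).Nonempty :=
    sdiff_nonempty.2 fun hsub => hne (eq_of_subset_of_card_le hsub hcard.ge)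
  have hts : (t \ s).Nonempty :=
    sdiff_nonempty.2 fun hsub => hne (eq_of_subset_of_card_le hsub hcard.le).symm
  obtain ⟨z, hz, hmax⟩ := exists_max_image (s \ t) w hst
  rw [← sum_sdiff_lt_sum_sdiff]
  calc ∑ y ∈ s \ t, w y ≤ #(s \ t) • w z := sum_le_card_nsmul _ _ _ hmax
    _ = ∑ _y ∈ t \ s, w z := by rw [sum_const, card_sdiff_comm hcard]
    _ < ∑ y ∈ t \ s, w y := sum_lt_sum_of_nonempty hts fun y hy =>
      hw y (mem_sdiff.1 hy).1 z (mem_sdiff.1 hz).2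

end PairwiseLargest

section UniqueBestResponse

variable {X F ι : Type*} [Fintype ι] {A : F → X → ℝ} {best : X → F} {p r : ℝ}

theorem exists_lt_one_forall_le_mul_of_forall_lt [Finite X] [Finite F] (hA : ∀ f x, 0 ≤ A f x)
    (hlt : ∀ f x, f ≠ best x → A f x < p) :
    ∃ r, 0 ≤ r ∧ r < 1 ∧ ∀ f x, f ≠ best x → A f x ≤ p * r := by
  have hall : ∀ᶠ r in 𝓝[<] (1 : ℝ), ∀ f x, f ≠ best x → A f x ≤ p * r := by
    refine eventually_all.2 fun f => eventually_all.2 fun x => ?_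
    by_cases hf : f = best x
    · exact .of_forall fun _ h => absurd hf h
    · have hp : 0 < p := (hA f x).trans_lt (hlt f x hf)
      have hratio : A f x / p < 1 := (div_lt_one hp).2 (hlt f x hf)
      filter_upwards [Ioo_mem_nhdsLT hratio] with r hr _
      rw [mul_comm]
      exact ((div_lt_iff₀ hp).1 hr.1).le
  obtain ⟨r, hr, hr01⟩ := (hall.and (Ioo_mem_nhdsLT one_pos)).exists
  exact ⟨r, hr01.1.le, hr01.2, hr⟩

theorem prod_le_pow_card_mul_pow_hammingDist [DecidableEq F] (hA : ∀ f x, 0 ≤ A f x)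
    (hbest : ∀ x, A (best x) x = p) (hr : ∀ f x, f ≠ best x → A f x ≤ p * r) (g : ι → F) (x : X) :
    ∏ i, A (g i) x ≤ p ^ Fintype.card ι * r ^ hammingDist g (fun _ => best x) :=
  calc ∏ i, A (g i) x ≤ ∏ i, p * (if g i ≠ best x then r else 1) := by
        refine prod_le_prod (fun i _ => hA _ _) fun i _ => ?_
        split_ifs with h
        · exact hr _ _ h
        · rw [not_not.1 h, hbest, mul_one]
    _ = p ^ Fintype.card ι * r ^ hammingDist g (fun _ => best x) := by
        rw [prod_mul_distrib, prod_const, ← prod_filter, prod_const, card_univ, hammingDist]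

theorem card_le_hammingDist_const_add_hammingDist_const [DecidableEq F] (g : ι → F) {b c : F}
    (hbc : b ≠ c) :
    Fintype.card ι ≤ hammingDist g (fun _ => b) + hammingDist g (fun _ => c) :=
  calc Fintype.card ι = hammingDist (fun _ : ι => b) (fun _ => c) := by simp [hammingDist, hbc]
    _ ≤ _ := hammingDist_triangle_left _ _ g

theorem sum_pow_hammingDist_const_le [Fintype X] [Nonempty X] [DecidableEq F]
    (hinj : Function.Injective best) (hr0 : 0 ≤ r) (hr1 : r ≤ 1) {g : ι → F}
    (hg : ¬∃ x, g = fun _ => best x) :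
    ∑ x, r ^ hammingDist g (fun _ => best x) ≤
      r + Fintype.card X * r ^ (Fintype.card ι / 2) := by
  classical
  obtain ⟨a, ha⟩ := Finite.exists_min fun x => hammingDist g fun _ => best x
  have hterm (x : X) : r ^ hammingDist g (fun _ => best x) ≤
      (if x = a then r else 0) + r ^ (Fintype.card ι / 2) := by
    split_ifs with hx
    · have hpos : hammingDist g (fun _ => best x) ≠ 0 := hammingDist_ne_zero.2 fun h => hg ⟨x, h⟩
      exact le_add_of_le_of_nonneg (pow_le_of_le_one hr0 hr1 hpos) (by positivity)
    · rw [zero_add]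
      have htwo := card_le_hammingDist_const_add_hammingDist_const g (hinj.ne hx)
      have hmin := ha x
      exact pow_le_pow_of_le_one hr0 hr1 (by omega)
  calc ∑ x, r ^ hammingDist g (fun _ => best x)
      ≤ ∑ x, ((if x = a then r else 0) + r ^ (Fintype.card ι / 2)) :=
        sum_le_sum fun x _ => hterm x
    _ = r + Fintype.card X * r ^ (Fintype.card ι / 2) := by
        rw [sum_add_distrib, sum_ite_eq' univ a, if_pos (mem_univ a), sum_const, card_univ,
          nsmul_eq_mul]

theorem eventually_sum_prod_lt_pow [Fintype X] [Nonempty X] [Finite F]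
    (hinj : Function.Injective best) (hA : ∀ f x, 0 ≤ A f x) (hbest : ∀ x, A (best x) x = p)
    (hlt : ∀ f x, f ≠ best x → A f x < p) :
    ∀ᶠ k : ℕ in atTop, ∀ g : Fin k → F, (¬∃ x, g = fun _ => best x) →
      ∑ x, ∏ i, A (g i) x < p ^ k := by
  classical
  obtain ⟨r, hr0, hr1, hr⟩ := exists_lt_one_forall_le_mul_of_forall_lt hA hlt
  have hlim : Tendsto (fun k : ℕ => r + Fintype.card X * r ^ (k / 2)) atTop (𝓝 r) := by
    simpa using (((tendsto_pow_atTop_nhds_zero_of_lt_one hr0 hr1).comp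
      (Nat.tendsto_div_const_atTop two_ne_zero)).const_mul (Fintype.card X : ℝ)).const_add r
  filter_upwards [hlim.eventually_lt_const hr1] with k hk g hg
  have hp : 0 < p := by
    obtain ⟨x⟩ := ‹Nonempty X›
    obtain ⟨i, hi⟩ := Function.ne_iff.1 (fun h => hg ⟨x, h⟩ : g ≠ fun _ => best x)
    exact (hA _ _).trans_lt (hlt (g i) x hi)
  have hsum := sum_pow_hammingDist_const_le hinj hr0 hr1.le hg
  rw [Fintype.card_fin] at hsum
  calc ∑ x, ∏ i, A (g i) x ≤ ∑ x, p ^ k * r ^ hammingDist g (fun _ => best x) :=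
        sum_le_sum fun x _ => by
          simpa using prod_le_pow_card_mul_pow_hammingDist hA hbest hr g x
    _ = p ^ k * ∑ x, r ^ hammingDist g (fun _ => best x) := (mul_sum ..).symm
    _ < p ^ k * 1 := by gcongr; exact hsum.trans_lt hk
    _ = p ^ k := mul_one _

end UniqueBestResponse

section HalfBall

variable {ι : Type*} [Fintype ι]

theorem hammingDist_compl_left_add_hammingDist (a y : ι → Bool) :
    hammingDist aᶜ y + hammingDist a y = Fintype.card ι := by
  have hcompl : #{i | aᶜ i ≠ y i} = #{i | ¬a i ≠ y i} := by simp
  rw [hammingDist, hammingDist, hcompl, add_comm, card_filter_add_card_filter_not, card_univ]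

theorem hammingDist_piecewise_compl [DecidableEq ι] (a : ι → Bool) (T : Finset ι) :
    hammingDist a (T.piecewise aᶜ a) = #T := by
  rw [hammingDist]
  congr 1
  ext i
  by_cases hi : i ∈ T <;> simp [hi]

theorem exists_perm_hammingDist_eq_apply_eq (a b : ι → Bool) :
    ∃ σ : Equiv.Perm (ι → Bool), (∀ x y, hammingDist (σ x) (σ y) = hammingDist x y) ∧ σ a = b :=
  ⟨(symmDiff_left_involutive (symmDiff a b)).toPerm,
    fun _ _ => hammingDist_comp (fun i c => symmDiff c (symmDiff a b i))
      fun _ => symmDiff_left_injective _,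
    symmDiff_symmDiff_cancel_left a b⟩

/-- The indicator of the Hamming ball around `a` whose radius is half the dimension: the majority
function centred at `a`. -/
def halfBall (a y : ι → Bool) : Bool := decide (2 * hammingDist a y < Fintype.card ι)

theorem halfBall_compl (hodd : Odd (Fintype.card ι)) (a : ι → Bool) :
    halfBall aᶜ = (halfBall a)ᶜ := by
  funext y
  have hsum := hammingDist_compl_left_add_hammingDist a y
  obtain ⟨m, hm⟩ := hodd
  rw [Pi.compl_apply, Bool.compl_eq_bnot, halfBall, halfBall, ← decide_not, decide_eq_decide]
  omega

theorem halfBall_compl_right (hodd : Odd (Fintype.card ι)) (a y : ι → Bool) :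
    halfBall a yᶜ = !halfBall a y := by
  have hswap (b z : ι → Bool) : halfBall b z = halfBall z b := by
    rw [halfBall, halfBall, hammingDist_comm]
  rw [hswap, halfBall_compl hodd, Pi.compl_apply, Bool.compl_eq_bnot, hswap]

theorem halfBall_comp_of_hammingDist_eq {σ : (ι → Bool) → ι → Bool}
    (hσ : ∀ x y, hammingDist (σ x) (σ y) = hammingDist x y) (a : ι → Bool) :
    halfBall (σ a) ∘ σ = halfBall a := by
  funext y
  rw [Function.comp_apply, halfBall, halfBall, hσ]

-- Where `a j ≠ b j`, flipping bit `j` of a boundary point of the ball around `a` leaves that ball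
-- while approaching `b`.
theorem halfBall_injective (hodd : Odd (Fintype.card ι)) :
    Function.Injective (halfBall : (ι → Bool) → (ι → Bool) → Bool) := by
  classical
  intro a b hab
  by_contra hne
  obtain ⟨j, hj⟩ := Function.ne_iff.1 hne
  obtain ⟨m, hm⟩ := hodd
  obtain ⟨T, hTj, hT⟩ : ∃ T ⊆ univ.erase j, #T = m :=
    exists_subset_card_eq (by rw [card_erase_of_mem (mem_univ j), card_univ]; omega)
  have hjT : j ∉ T := fun h => by simpa using hTj h
  have hmem : halfBall b (T.piecewise aᶜ a) = true := by
    rw [← hab, halfBall, hammingDist_piecewise_compl, decide_eq_true_eq]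
    omega
  have hnotMem : halfBall b ((insert j T).piecewise aᶜ a) = false := by
    rw [← hab, halfBall, hammingDist_piecewise_compl, card_insert_of_notMem hjT,
      decide_eq_false_iff_not]
    omega
  have hle : hammingDist b ((insert j T).piecewise aᶜ a) ≤ hammingDist b (T.piecewise aᶜ a) := by
    refine card_le_card fun i => ?_
    rcases eq_or_ne i j with rfl | hij
    · have hbi : b i = !a i := Bool.eq_not_of_ne hj.symm
      simp [hbi]
    · simp [hij, piecewise_insert_of_ne]
  rw [halfBall, decide_eq_true_eq] at hmem
  rw [halfBall, decide_eq_false_iff_not] at hnotMem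
  omega

end HalfBall

section Majority

variable {n : ℕ}

theorem countOnes_add_hammingDist_top (y : Fin n → Bool) :
    countOnes y + hammingDist ⊤ y = n := by
  have hones : countOnes y = #{i | y i = true} := by
    simp [countOnes, Bool.cond_eq_ite]
  have hzeros : hammingDist ⊤ y = #{i | ¬y i = true} := by
    simp [hammingDist]
  rw [hones, hzeros, card_filter_add_card_filter_not, card_univ, Fintype.card_fin]

theorem majn_eq_halfBall_top : majn n = halfBall ⊤ := by
  funext y
  have hsum := countOnes_add_hammingDist_top y
  rw [majn, halfBall, decide_eq_decide, Fintype.card_fin]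
  omega

theorem hammingDist_piS (π : Equiv.Perm (Fin n)) (S : Finset (Fin n)) (x y : Fin n → Bool) :
    hammingDist (piS π S x) (piS π S y) = hammingDist x y := by
  refine card_equiv π fun i => ?_
  rw [mem_filter_univ, mem_filter_univ]
  by_cases hi : i ∈ S <;> simp [piS, hi]

theorem majn_comp_piS_eq_halfBall {π : Equiv.Perm (Fin n)} {S : Finset (Fin n)}
    {a : Fin n → Bool} (ha : piS π S a = ⊤) : majn n ∘ piS π S = halfBall a := by
  rw [majn_eq_halfBall_top, ← ha, halfBall_comp_of_hammingDist_eq (hammingDist_piS π S)]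

theorem exists_piS_iff_exists_halfBall {ι : Type*} {fs : ι → (Fin n → Bool) → Bool} :
    (∃ (π : Equiv.Perm (Fin n)) (S : Finset (Fin n)), fs = fun _ x => majn n (piS π S x)) ↔
      ∃ a, fs = fun _ => halfBall a := by
  constructor
  · rintro ⟨π, S, rfl⟩
    have htop : piS π S (fun i => decide (π.symm i ∈ S)) = ⊤ := by
      funext i
      by_cases hi : i ∈ S <;> simp [piS, hi]
    exact ⟨_, funext fun _ => majn_comp_piS_eq_halfBall htop⟩
  · rintro ⟨a, rfl⟩
    have htop : piS 1 {i | a i = true} a = ⊤ := by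
      funext i
      cases hi : a i <;> simp [piS, hi]
    exact ⟨1, _, funext fun _ => (majn_comp_piS_eq_halfBall htop).symm⟩

end Majority

section Balanced

variable {n : ℕ} {f : (Fin n → Bool) → Bool}

theorem BalancedFn.two_mul_card (hf : BalancedFn f) : 2 * #{x | f x = true} = 2 ^ n := by
  have hsplit := card_filter_add_card_filter_not (s := univ) fun x : Fin n → Bool => f x = true
  simp only [Bool.not_eq_true, card_univ, Fintype.card_pi_const, Fintype.card_bool] at hsplit
  rw [BalancedFn] at hf
  omega

theorem BalancedFn.compl (hf : BalancedFn f) : BalancedFn fᶜ := by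
  simpa [BalancedFn] using hf.symm

theorem balancedFn_halfBall (hodd : Odd n) (a : Fin n → Bool) : BalancedFn (halfBall a) := by
  refine card_equiv compl_involutive.toPerm fun y => ?_
  have hflip : halfBall a yᶜ = !halfBall a y :=
    halfBall_compl_right (by rwa [Fintype.card_fin]) a y
  simp [hflip]

end Balanced

section Noise

variable {n : ℕ} {ε : ℝ}

theorem noiseWt_nonneg (hε₀ : 0 ≤ ε) (hε₁ : ε ≤ 1) (x y : Fin n → Bool) : 0 ≤ noiseWt ε x y :=
  prod_nonneg fun _ _ => by split_ifs <;> linarith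

theorem noiseWt_eq_pow_mul_pow (ε : ℝ) (x y : Fin n → Bool) :
    noiseWt ε x y = ε ^ hammingDist x y * (1 - ε) ^ (n - hammingDist x y) := by
  have hagree : #{j | y j = x j} = n - hammingDist x y := by
    have hsplit := card_filter_add_card_filter_not (s := univ) fun j => x j ≠ y j
    simp only [not_not, card_univ, Fintype.card_fin] at hsplit
    simp only [eq_comm (a := y _)]
    rw [hammingDist]
    omega
  have hdiffer : #{j | ¬y j = x j} = hammingDist x y := hammingDist_comm y x
  rw [noiseWt, prod_ite, prod_const, prod_const, hagree, hdiffer, mul_comm]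

theorem noiseWt_lt_noiseWt_of_hammingDist_lt (hε₀ : 0 < ε) (hε₁ : ε < 1 / 2)
    {x y z : Fin n → Bool} (h : hammingDist x y < hammingDist x z) :
    noiseWt ε x z < noiseWt ε x y := by
  rw [noiseWt_eq_pow_mul_pow, noiseWt_eq_pow_mul_pow]
  have hle : hammingDist x z ≤ n := hammingDist_le_card_fintype.trans_eq (Fintype.card_fin n)
  generalize hammingDist x y = d at *
  obtain ⟨e, he⟩ := Nat.exists_eq_add_of_lt h
  generalize hammingDist x z = d' at *
  have hsplit : n - d = (n - d') + (e + 1) := by omega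
  have hone_sub : 0 < 1 - ε := by linarith
  have hpow : ε ^ (e + 1) < (1 - ε) ^ (e + 1) :=
    pow_lt_pow_left₀ (by linarith) hε₀.le e.succ_ne_zero
  calc ε ^ d' * (1 - ε) ^ (n - d') = ε ^ d * (1 - ε) ^ (n - d') * ε ^ (e + 1) := by
        rw [he]; ring
    _ < ε ^ d * (1 - ε) ^ (n - d') * (1 - ε) ^ (e + 1) := by gcongr
    _ = ε ^ d * (1 - ε) ^ (n - d) := by rw [hsplit]; ring

theorem noiseWt_eq_of_hammingDist_eq {x y x' y' : Fin n → Bool}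
    (h : hammingDist x y = hammingDist x' y') : noiseWt ε x y = noiseWt ε x' y' := by
  rw [noiseWt_eq_pow_mul_pow, noiseWt_eq_pow_mul_pow, h]

theorem agreeProb_comp_of_hammingDist_eq {k : ℕ} {σ : Equiv.Perm (Fin n → Bool)}
    (hσ : ∀ x y, hammingDist (σ x) (σ y) = hammingDist x y)
    (fs : Fin k → (Fin n → Bool) → Bool) :
    agreeProb ε n k (fun i => fs i ∘ σ) = agreeProb ε n k fs := by
  rw [agreeProb, agreeProb]
  congr 1
  refine Fintype.sum_equiv σ _ _ fun x => ?_
  refine Fintype.sum_equiv (Equiv.piCongrRight fun _ => σ) _ _ fun ys => ?_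
  simp only [Equiv.piCongrRight_apply, Pi.map_apply, Function.comp_apply,
    noiseWt_eq_of_hammingDist_eq (hσ _ _)]

theorem agreeProb_halfBall_eq (k : ℕ) (a b : Fin n → Bool) :
    agreeProb ε n k (fun _ => halfBall a) = agreeProb ε n k (fun _ => halfBall b) := by
  obtain ⟨σ, hσ, rfl⟩ := exists_perm_hammingDist_eq_apply_eq a b
  rw [← agreeProb_comp_of_hammingDist_eq hσ fun _ => halfBall (σ a),
    halfBall_comp_of_hammingDist_eq hσ]

end Noise

section AcceptProb

variable {n : ℕ} {ε : ℝ} {f : (Fin n → Bool) → Bool}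

/-- The conditional probability that a party using `f` outputs `1`, given the source `x`.
The output `0` is covered by applying this to `fᶜ`. -/
noncomputable def acceptProb (ε : ℝ) (f : (Fin n → Bool) → Bool) (x : Fin n → Bool) : ℝ :=
  ∑ y with f y = true, noiseWt ε x y

theorem acceptProb_nonneg (hε₀ : 0 ≤ ε) (hε₁ : ε ≤ 1) (f : (Fin n → Bool) → Bool)
    (x : Fin n → Bool) : 0 ≤ acceptProb ε f x :=
  sum_nonneg fun y _ => noiseWt_nonneg hε₀ hε₁ x y

theorem acceptProb_lt_acceptProb_halfBall (hodd : Odd n) (hε₀ : 0 < ε) (hε₁ : ε < 1 / 2)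
    (hf : BalancedFn f) {x : Fin n → Bool} (hne : f ≠ halfBall x) :
    acceptProb ε f x < acceptProb ε (halfBall x) x := by
  refine sum_lt_sum_of_card_eq_of_forall_lt ?_ ?_ fun y hy z hz => ?_
  · have hcard := hf.two_mul_card
    have hcardBall := (balancedFn_halfBall hodd x).two_mul_card
    omega
  · refine fun heq => hne (funext fun y => Bool.eq_iff_iff.2 ?_)
    simpa using Finset.ext_iff.1 heq y
  · refine noiseWt_lt_noiseWt_of_hammingDist_lt hε₀ hε₁ ?_
    simp only [mem_filter_univ, halfBall, decide_eq_true_eq] at hy hz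
    omega

theorem acceptProb_halfBall_self_eq (a b : Fin n → Bool) :
    acceptProb ε (halfBall a) a = acceptProb ε (halfBall b) b := by
  obtain ⟨σ, hσ, rfl⟩ := exists_perm_hammingDist_eq_apply_eq a b
  refine sum_equiv σ (fun y => ?_) fun y _ => noiseWt_eq_of_hammingDist_eq (hσ a y).symm
  simp only [mem_filter_univ, ← halfBall_comp_of_hammingDist_eq hσ a, Function.comp_apply]

theorem sum_prod_noiseWt_eq_prod_acceptProb {k : ℕ} (fs : Fin k → (Fin n → Bool) → Bool)
    (x : Fin n → Bool) :
    ∑ ys : Fin k → Fin n → Bool with ∀ i, fs i (ys i) = true, ∏ i, noiseWt ε x (ys i) =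
      ∏ i, acceptProb ε (fs i) x := by
  simp only [acceptProb, prod_univ_sum]
  congr 1
  ext ys
  simp [Fintype.mem_piFinset]

theorem agreeProb_eq_sum_prod_acceptProb {k : ℕ} (hk : 0 < k)
    (fs : Fin k → (Fin n → Bool) → Bool) :
    agreeProb ε n k fs = ((2 : ℝ) ^ n)⁻¹ *
      (∑ x, ∏ i, acceptProb ε (fs i) x + ∑ x, ∏ i, acceptProb ε (fs i)ᶜ x) := by
  have hagree (ys : Fin k → Fin n → Bool) : (∀ i j, fs i (ys i) = fs j (ys j)) ↔
      (∀ i, fs i (ys i) = true) ∨ ∀ i, (fs i)ᶜ (ys i) = true := by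
    constructor
    · intro h
      cases hv : fs ⟨0, hk⟩ (ys ⟨0, hk⟩)
      · exact .inr fun i => by simp [h i ⟨0, hk⟩, hv]
      · exact .inl fun i => (h i ⟨0, hk⟩).trans hv
    · rintro (hone | hzero) i j
      · rw [hone, hone]
      · simpa using (hzero i).trans (hzero j).symm
  rw [agreeProb, ← sum_add_distrib]
  congr 1
  refine sum_congr rfl fun x _ => ?_
  simp only [← sum_prod_noiseWt_eq_prod_acceptProb, mul_boole, ← sum_filter, hagree]
  rw [filter_or, sum_union]
  refine disjoint_filter.2 fun ys _ hone hzero => ?_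
  simpa [hone] using hzero ⟨0, hk⟩

end AcceptProb

section LargeNumberOfParties

variable {n : ℕ} {ε : ℝ}

theorem pow_acceptProb_le_sum_prod {k : ℕ} (hε₀ : 0 ≤ ε) (hε₁ : ε ≤ 1)
    (f : (Fin n → Bool) → Bool) (x : Fin n → Bool) :
    acceptProb ε f x ^ k ≤ ∑ x, ∏ _i : Fin k, acceptProb ε f x := by
  simp only [prod_const, card_univ, Fintype.card_fin]
  exact single_le_sum (f := fun x => acceptProb ε f x ^ k)
    (fun x _ => pow_nonneg (acceptProb_nonneg hε₀ hε₁ f x) k) (mem_univ x)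

theorem le_agreeProb_halfBall {k : ℕ} (hk : 0 < k) (hodd : Odd n) (hε₀ : 0 ≤ ε) (hε₁ : ε ≤ 1)
    (a : Fin n → Bool) :
    ((2 : ℝ) ^ n)⁻¹ * (acceptProb ε (halfBall a) a ^ k + acceptProb ε (halfBall a) a ^ k) ≤
      agreeProb ε n k fun _ => halfBall a := by
  rw [agreeProb_eq_sum_prod_acceptProb hk, ← halfBall_compl (by rwa [Fintype.card_fin])]
  gcongr
  · exact pow_acceptProb_le_sum_prod hε₀ hε₁ _ a
  · rw [acceptProb_halfBall_self_eq a aᶜ]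
    exact pow_acceptProb_le_sum_prod hε₀ hε₁ _ aᶜ

theorem eventually_sum_prod_acceptProb_lt_pow (hodd : Odd n) (hε₀ : 0 < ε) (hε₁ : ε < 1 / 2)
    (a : Fin n → Bool) :
    ∀ᶠ k : ℕ in atTop, ∀ fs : Fin k → (Fin n → Bool) → Bool, (∀ i, BalancedFn (fs i)) →
      (¬∃ b, fs = fun _ => halfBall b) →
        ∑ x, ∏ i, acceptProb ε (fs i) x < acceptProb ε (halfBall a) a ^ k := by
  have hinj : Function.Injective fun b : Fin n → Bool =>
      (⟨halfBall b, balancedFn_halfBall hodd b⟩ : {f // BalancedFn f}) := fun b c h =>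
    halfBall_injective (by rwa [Fintype.card_fin]) (congrArg Subtype.val h)
  have key := eventually_sum_prod_lt_pow hinj
    (fun f => acceptProb_nonneg hε₀.le (by linarith) f.1)
    (fun b => acceptProb_halfBall_self_eq b a) fun f b hne =>
      (acceptProb_lt_acceptProb_halfBall hodd hε₀ hε₁ f.2 (fun h => hne (Subtype.ext h))).trans_eq
        (acceptProb_halfBall_self_eq b a)
  filter_upwards [key] with k hk fs hfs hne
  refine hk (fun i => ⟨fs i, hfs i⟩) ?_
  rintro ⟨b, hb⟩
  exact hne ⟨b, funext fun i => congrArg Subtype.val (congrFun hb i)⟩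

theorem eventually_agreeProb_lt_agreeProb_halfBall (hodd : Odd n) (hε₀ : 0 < ε)
    (hε₁ : ε < 1 / 2) :
    ∀ᶠ k : ℕ in atTop, ∀ fs : Fin k → (Fin n → Bool) → Bool, (∀ i, BalancedFn (fs i)) →
      (¬∃ b, fs = fun _ => halfBall b) →
        ∀ a, agreeProb ε n k fs < agreeProb ε n k fun _ => halfBall a := by
  filter_upwards [eventually_sum_prod_acceptProb_lt_pow hodd hε₀ hε₁ ⊤, eventually_gt_atTop 0]
    with k hlt hk fs hfs hne a
  have hne_compl : ¬∃ b, (fun i => (fs i)ᶜ) = fun _ => halfBall b := by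
    rintro ⟨b, hb⟩
    refine hne ⟨bᶜ, funext fun i => ?_⟩
    rw [halfBall_compl (by rwa [Fintype.card_fin]), ← congrFun hb i, compl_compl]
  have hone := hlt fs hfs hne
  have hzero := hlt (fun i => (fs i)ᶜ) (fun i => (hfs i).compl) hne_compl
  rw [agreeProb_halfBall_eq k a ⊤]
  refine lt_of_lt_of_le ?_ (le_agreeProb_halfBall hk hodd hε₀.le (by linarith) ⊤)
  rw [agreeProb_eq_sum_prod_acceptProb hk]
  gcongr

end LargeNumberOfParties

/-- For odd `n` and fixed `ε`, for all large enough `k` the unique best protocol of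
balanced functions, up to `π_S`, is all parties using `Maj_n`. -/
theorem statement10 (n : ℕ) (hn : 0 < n) (hodd : Odd n) (ε : ℝ) (hε₀ : 0 < ε)
    (hε₁ : ε < 1 / 2) :
    ∃ K : ℕ, ∀ k : ℕ, K ≤ k →
      {fs : Fin k → (Fin n → Bool) → Bool |
          (∀ i, BalancedFn (fs i)) ∧
            ∀ gs : Fin k → (Fin n → Bool) → Bool, (∀ i, BalancedFn (gs i)) →
              agreeProb ε n k gs ≤ agreeProb ε n k fs} =
        {fs | ∃ (π : Equiv.Perm (Fin n)) (S : Finset (Fin n)),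
            fs = fun _ => fun x => majn n (piS π S x)} := by
  obtain ⟨K, hK⟩ := eventually_atTop.1 (eventually_agreeProb_lt_agreeProb_halfBall hodd hε₀ hε₁)
  refine ⟨K, fun k hk => ?_⟩
  simp only [exists_piS_iff_exists_halfBall]
  refine Set.Subset.antisymm ?_ ?_
  · rintro fs ⟨hfs, hmax⟩
    by_contra hne
    exact (hK k hk fs hfs hne ⊤).not_ge (hmax _ fun _ => balancedFn_halfBall hodd ⊤)
  · rintro _ ⟨a, rfl⟩
    refine ⟨fun _ => balancedFn_halfBall hodd a, fun gs hgs => ?_⟩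
    by_cases hball : ∃ b, gs = fun _ => halfBall b
    · obtain ⟨b, rfl⟩ := hball
      exact (agreeProb_halfBall_eq k b a).le
    · exact (hK k hk gs hgs hball a).le
end

section
/- There exist n ≥ 1, k ≥ 1, ε ∈ (0,1/2) and a balanced function f : {0,1}^n → {0,1} such that Pr[f(y^1) = ⋯ = f(y^k) = 1] ≠ Pr[f(y^1) = ⋯ = f(y^k) = 0]. (For instance, n = 5, k = 3, and the left-monotone balanced function whose minimal 1-inputs are 10010 and 01101 is such an example for generic ε.) -/
open Finset

/-- The probability that all `k` parties output the bit `b`. -/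
noncomputable def allEqProb (ε : ℝ) (n k : ℕ) (fs : Fin k → (Fin n → Bool) → Bool)
    (b : Bool) : ℝ :=
  ((2 : ℝ) ^ n)⁻¹ * ∑ x : Fin n → Bool, ∑ ys : Fin k → Fin n → Bool,
    (∏ i : Fin k, noiseWt ε x (ys i)) * (if ∀ i : Fin k, fs i (ys i) = b then 1 else 0)

/-!
Write `T` for the noise operator and `g = ±1` for the sign of `f`, so that given the source `x` each
party outputs `1` with probability `(1 + T g x) / 2`. For three parties and a balanced `f`,
expanding the cubes gives `Pr[all 1] - Pr[all 0] = E[(T g)³] / 4`, because `E[T g] = E[g] = 0`.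
This third moment vanishes if permuting and flipping input bits can turn `f` into its negation.
Four bits suffice to avoid all such symmetries: let the first bit select between a function with
two `1`s, at Hamming distance `3`, and a function with two `0`s, at Hamming distance `1`. As `T`
scales the Walsh character of `S` by `(1 - 2ε) ^ |S|`, the third moment is then
`(3 / 8) ρ⁴ (1 - ρ²)²` with `ρ = 1 - 2ε`.
-/

section Cube

theorem sum_pi_fin_succ {α M : Type*} [Fintype α] [AddCommMonoid M] {n : ℕ}
    (F : (Fin (n + 1) → α) → M) :
    ∑ x, F x = ∑ a, ∑ x : Fin n → α, F (Fin.cons a x) := by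
  rw [← (Fin.consEquiv fun _ => α).sum_comp, Fintype.sum_prod_type]
  rfl

theorem sum_pi_fin_four {α M : Type*} [Fintype α] [AddCommMonoid M] (F : (Fin 4 → α) → M) :
    ∑ x, F x = ∑ a, ∑ b, ∑ c, ∑ d, F ![a, b, c, d] := by
  simp only [sum_pi_fin_succ, univ_unique, sum_singleton, Subsingleton.elim default ![]]
  rfl

end Cube

section Walsh

/-- The `±1` encoding of a bit (`true ↦ 1`), for which balanced functions have mean zero. -/
def boolSign (b : Bool) : ℝ := if b then 1 else -1

/-- The Walsh character `χ_S` on the cube `{0,1}^n`, an eigenfunction of the noise operator. -/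
def walsh {n : ℕ} (S : Finset (Fin n)) (x : Fin n → Bool) : ℝ := ∏ j ∈ S, boolSign (x j)

theorem boolSign_not (b : Bool) : boolSign (!b) = -boolSign b := by
  cases b <;> norm_num [boolSign]

variable {n : ℕ}

theorem walsh_empty : walsh (∅ : Finset (Fin n)) = 1 := by
  ext
  simp only [walsh, prod_empty, Pi.one_apply]

theorem walsh_singleton (j : Fin n) (x : Fin n → Bool) : walsh {j} x = boolSign (x j) :=
  prod_singleton _ _

theorem walsh_insert {S : Finset (Fin n)} {j : Fin n} (hj : j ∉ S) (x : Fin n → Bool) :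
    walsh (insert j S) x = boolSign (x j) * walsh S x :=
  prod_insert hj

end Walsh

section NoiseOperator

/-- The noise operator `T`, averaging a function over the `ε`-corruptions of its argument. -/
noncomputable def noiseOp (ε : ℝ) {n : ℕ} :
    ((Fin n → Bool) → ℝ) →ₗ[ℝ] ((Fin n → Bool) → ℝ) where
  toFun g x := ∑ y, noiseWt ε x y * g y
  map_add' g h := by ext x; simp only [Pi.add_apply, mul_add, sum_add_distrib]
  map_smul' c g := by
    ext x
    simp only [Pi.smul_apply, smul_eq_mul, RingHom.id_apply, mul_sum, mul_left_comm]

variable {n : ℕ} (ε : ℝ)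

theorem noiseOp_apply (g : (Fin n → Bool) → ℝ) (x : Fin n → Bool) :
    noiseOp ε g x = ∑ y, noiseWt ε x y * g y := rfl

theorem noiseWt_comm (x y : Fin n → Bool) : noiseWt ε x y = noiseWt ε y x := by
  simp only [noiseWt, eq_comm]

theorem noiseOp_prod (φ : Fin n → Bool → ℝ) (x : Fin n → Bool) :
    noiseOp ε (fun y => ∏ j, φ j (y j)) x = ∏ j, ((1 - ε) * φ j (x j) + ε * φ j (!x j)) := by
  calc noiseOp ε (fun y => ∏ j, φ j (y j)) x
      = ∑ y : Fin n → Bool, ∏ j, (if y j = x j then 1 - ε else ε) * φ j (y j) := by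
        simp only [noiseOp_apply, noiseWt, prod_mul_distrib]
    _ = ∏ j, ∑ b, (if b = x j then 1 - ε else ε) * φ j b := by
        rw [Fintype.prod_sum]
    _ = ∏ j, ((1 - ε) * φ j (x j) + ε * φ j (!x j)) := by
        refine prod_congr rfl fun j _ => ?_
        cases x j <;> simp [add_comm]

theorem noiseOp_walsh (S : Finset (Fin n)) :
    noiseOp ε (walsh S) = (1 - 2 * ε) ^ #S • walsh S := by
  have walsh_eq_prod_univ (y : Fin n → Bool) :
      walsh S y = ∏ j, if j ∈ S then boolSign (y j) else 1 := by
    rw [walsh, prod_ite_mem, univ_inter]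
  ext x
  calc noiseOp ε (walsh S) x
      = ∏ j, if j ∈ S then (1 - 2 * ε) * boolSign (x j) else 1 := by
        rw [funext walsh_eq_prod_univ, noiseOp_prod ε fun j b => if j ∈ S then boolSign b else 1]
        refine prod_congr rfl fun j _ => ?_
        rw [boolSign_not]
        split_ifs <;> ring
    _ = (1 - 2 * ε) ^ #S * walsh S x := by
        rw [prod_ite_mem, univ_inter, prod_mul_distrib, prod_const, walsh]

theorem noiseOp_one : noiseOp ε (1 : (Fin n → Bool) → ℝ) = 1 := by
  simpa [walsh_empty] using noiseOp_walsh ε (∅ : Finset (Fin n))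

theorem sum_noiseOp (g : (Fin n → Bool) → ℝ) : ∑ x, noiseOp ε g x = ∑ y, g y := by
  have sum_noiseWt (y : Fin n → Bool) : ∑ x, noiseWt ε x y = 1 := by
    simpa [noiseOp_apply, noiseWt_comm ε y] using congrFun (noiseOp_one ε) y
  simp only [noiseOp_apply]
  rw [sum_comm]
  simp only [← sum_mul, sum_noiseWt, one_mul]

end NoiseOperator

section Agreement

variable {n : ℕ} (ε : ℝ)

theorem BalancedFn.sum_boolSign_eq_zero {f : (Fin n → Bool) → Bool} (hf : BalancedFn f) :
    ∑ x, boolSign (f x) = 0 := by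
  have card_eq : (#{x | f x = false} : ℝ) = #{x | f x = true} := congrArg Nat.cast hf
  simp [boolSign, sum_ite, card_eq]

theorem allEqProb_eq_sum_prod_noiseOp {k : ℕ} (fs : Fin k → (Fin n → Bool) → Bool) (b : Bool) :
    allEqProb ε n k fs b =
      ((2 : ℝ) ^ n)⁻¹ * ∑ x, ∏ i, noiseOp ε (fun y => if fs i y = b then 1 else 0) x := by
  simp only [allEqProb, noiseOp_apply, Fintype.prod_sum, prod_mul_distrib,
    prod_ite_zero, prod_const_one, mem_univ, true_imp_iff]

theorem noiseOp_ite_eq (f : (Fin n → Bool) → Bool) (b : Bool) (x : Fin n → Bool) :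
    noiseOp ε (fun y => if f y = b then 1 else 0) x =
      (1 + boolSign b * noiseOp ε (fun y => boolSign (f y)) x) / 2 := by
  have indicator_eq : (fun y => if f y = b then (1 : ℝ) else 0) =
      (1 / 2 : ℝ) • (1 + boolSign b • fun y => boolSign (f y)) := by
    ext y
    cases hy : f y <;> cases b <;> norm_num [hy, boolSign]
  rw [indicator_eq, map_smul, map_add, map_smul, noiseOp_one]
  simp only [Pi.smul_apply, Pi.add_apply, Pi.one_apply, smul_eq_mul]
  ring

theorem BalancedFn.allEqProb_three_true_sub_false {f : (Fin n → Bool) → Bool}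
    (hf : BalancedFn f) :
    allEqProb ε n 3 (fun _ => f) true - allEqProb ε n 3 (fun _ => f) false =
      ((2 : ℝ) ^ n)⁻¹ * ((∑ x, noiseOp ε (fun y => boolSign (f y)) x ^ 3) / 4) := by
  set t := noiseOp ε (fun y => boolSign (f y)) with ht
  have sum_t : ∑ x, t x = 0 := by rw [ht, sum_noiseOp, hf.sum_boolSign_eq_zero]
  have cube_sub_cube (x : Fin n → Bool) :
      ((1 + boolSign true * t x) / 2) ^ 3 - ((1 + boolSign false * t x) / 2) ^ 3 =
        3 / 4 * t x + t x ^ 3 / 4 := by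
    simp only [boolSign, if_true, Bool.false_eq_true, if_false]
    ring
  simp only [allEqProb_eq_sum_prod_noiseOp, noiseOp_ite_eq, prod_const, card_univ, Fintype.card_fin,
    ← ht]
  rw [← mul_sub, ← sum_sub_distrib, sum_congr rfl fun x _ => cube_sub_cube x, sum_add_distrib,
    ← mul_sum, sum_t, mul_zero, zero_add, sum_div]

end Agreement

section Example

/-- The counterexample: `x₀` selects between `x₁ = x₂ = x₃` (two `1`s, at distance `3`) and
`¬(x₁ ∧ x₂)` (two `0`s, at distance `1`). -/
def allEqElseNand (x : Fin 4 → Bool) : Bool :=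
  if x 0 then x 1 == x 2 && x 2 == x 3 else !(x 1 && x 2)

theorem balancedFn_allEqElseNand : BalancedFn allEqElseNand := by
  unfold BalancedFn
  decide

theorem boolSign_allEqElseNand :
    (fun y => boolSign (allEqElseNand y)) = (1 / 4 : ℝ) •
      ((2 : ℝ) • walsh {0, 1, 2} + walsh {0, 1, 3} + walsh {0, 2, 3}
        + walsh {0, 1} + walsh {0, 2} + walsh {1, 3} + walsh {2, 3}
        - (2 : ℝ) • walsh {0} - walsh {1} - walsh {2}) := by
  ext y
  simp only [Pi.smul_apply, Pi.add_apply, Pi.sub_apply, walsh_insert, walsh_singleton, mem_insert,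
    mem_singleton, Fin.reduceEq, or_self, not_false_eq_true, allEqElseNand]
  cases y 0 <;> cases y 1 <;> cases y 2 <;> cases y 3 <;> norm_num [boolSign]

theorem noiseOp_allEqElseNand (ε : ℝ) :
    noiseOp ε (fun y => boolSign (allEqElseNand y)) = (1 / 4 : ℝ) •
      ((1 - 2 * ε) ^ 3 • ((2 : ℝ) • walsh {0, 1, 2} + walsh {0, 1, 3} + walsh {0, 2, 3})
        + (1 - 2 * ε) ^ 2 • (walsh {0, 1} + walsh {0, 2} + walsh {1, 3} + walsh {2, 3})
        - (1 - 2 * ε) • ((2 : ℝ) • walsh {0} + walsh {1} + walsh {2})) := by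
  rw [boolSign_allEqElseNand]
  simp only [map_smul, map_add, map_sub, noiseOp_walsh, card_insert_of_notMem, card_singleton,
    mem_insert, mem_singleton, Fin.reduceEq, or_self, not_false_eq_true]
  module

theorem sum_noiseOp_allEqElseNand_cube (ε : ℝ) :
    ∑ x, noiseOp ε (fun y => boolSign (allEqElseNand y)) x ^ 3 =
      6 * (1 - 2 * ε) ^ 4 * (1 - (1 - 2 * ε) ^ 2) ^ 2 := by
  simp only [noiseOp_allEqElseNand, Pi.smul_apply, Pi.add_apply, Pi.sub_apply, smul_eq_mul,
    walsh_insert, walsh_singleton, mem_insert, mem_singleton, Fin.reduceEq, or_self,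
    not_false_eq_true]
  generalize 1 - 2 * ε = ρ
  simp only [sum_pi_fin_four, Fintype.sum_bool, Matrix.cons_val, boolSign, if_true,
    Bool.false_eq_true, if_false]
  ring

end Example

theorem statement18_general :
    ∃ (n k : ℕ) (f : (Fin n → Bool) → Bool), 1 ≤ n ∧ 1 ≤ k ∧ BalancedFn f ∧
      ∀ ε : ℝ, 0 < ε → ε < 1 → ε ≠ 1 / 2 →
        allEqProb ε n k (fun _ => f) true ≠ allEqProb ε n k (fun _ => f) false := by
  refine ⟨4, 3, allEqElseNand, by norm_num, by norm_num, balancedFn_allEqElseNand,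
    fun ε hε₀ hε₁ hε => sub_ne_zero.mp ?_⟩
  rw [balancedFn_allEqElseNand.allEqProb_three_true_sub_false, sum_noiseOp_allEqElseNand_cube]
  have correlation_ne_zero : 1 - 2 * ε ≠ 0 := fun h => hε (by linarith)
  have one_sub_correlation_sq_pos : 0 < 1 - (1 - 2 * ε) ^ 2 := by nlinarith
  positivity

/-- There is a balanced function for which the probability that all parties agree on `1`
differs from the probability that all parties agree on `0`. -/
theorem statement18 :
    ∃ (n k : ℕ) (ε : ℝ) (f : (Fin n → Bool) → Bool),
      1 ≤ n ∧ 1 ≤ k ∧ 0 < ε ∧ ε < 1 / 2 ∧ BalancedFn f ∧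
        allEqProb ε n k (fun _ => f) true ≠ allEqProb ε n k (fun _ => f) false := by
  obtain ⟨n, k, f, hn, hk, hf, hne⟩ := statement18_general
  exact ⟨n, k, 1 / 4, f, hn, hk, by norm_num, by norm_num, hf,
    hne _ (by norm_num) (by norm_num) (by norm_num)⟩
end
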